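/- arXiv:2101.11094 — 4 statements merged into one kernel-verified Lean document; each statement's English description precedes it below -/
import Mathlib

section
/- (Mahler–Weyl) Let Λ be a lattice of full rank in ℝ^n with successive minima λ_1 ≤ … ≤ λ_n. Then there exists a ℤ-basis v^1,…,v^n of Λ such that λ_s ≤ |v^s|_2 ≤ max{1, s/2}·λ_s for all s = 1,…,n. -/
/-- The Euclidean norm of a vector in `ι → ℝ`. -/
noncomputable def enorm2 {ι : Type*} [Fintype ι] (v : ι → ℝ) : ℝ := Real.sqrt (∑ i, v i ^ 2)

/-- The `s`-th successive minimum of a set `Λ ⊆ ℝ^ι` (with respect to the Euclidean norm). -/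
noncomputable def succMin {ι : Type*} [Fintype ι] (Λ : Set (ι → ℝ)) (s : ℕ) : ℝ :=
  sInf {r : ℝ | 0 < r ∧ ∃ w : Fin s → ι → ℝ,
    (∀ k, w k ∈ Λ) ∧ LinearIndependent ℝ w ∧ ∀ k, enorm2 (w k) ≤ r}

/- Mahler–Weyl: greedy successive minima, then reduction of a flag-adapted basis. -/

lemma enorm2_eq_norm {ι : Type*} [Fintype ι] (v : ι → ℝ) :
    enorm2 v = ‖(WithLp.toLp 2 v : EuclideanSpace ℝ ι)‖ := by
  simp [enorm2, EuclideanSpace.norm_eq]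

lemma enorm2_nonneg {ι : Type*} [Fintype ι] (v : ι → ℝ) : 0 ≤ enorm2 v := Real.sqrt_nonneg _

lemma enorm2_add_le {ι : Type*} [Fintype ι] (v w : ι → ℝ) :
    enorm2 (v + w) ≤ enorm2 v + enorm2 w := by
  simp only [enorm2_eq_norm, WithLp.toLp_add]
  exact norm_add_le _ _

lemma enorm2_smul {ι : Type*} [Fintype ι] (c : ℝ) (v : ι → ℝ) :
    enorm2 (c • v) = |c| * enorm2 v := by
  simp only [enorm2_eq_norm, WithLp.toLp_smul, norm_smul, Real.norm_eq_abs]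

lemma enorm2_pos {ι : Type*} [Fintype ι] {v : ι → ℝ} (h : v ≠ 0) : 0 < enorm2 v := by
  rw [enorm2_eq_norm, norm_pos_iff]
  simpa using h

lemma norm_le_enorm2 {ι : Type*} [Fintype ι] (v : ι → ℝ) : ‖v‖ ≤ enorm2 v := by
  rw [pi_norm_le_iff_of_nonneg (enorm2_nonneg v)]
  intro i
  rw [Real.norm_eq_abs]
  apply Real.abs_le_sqrt
  exact Finset.single_le_sum (f := fun i => v i ^ 2) (fun i _ => sq_nonneg _) (Finset.mem_univ i)

lemma finite_ball {n : ℕ} (b : Fin n → (Fin n → ℝ)) (hb : LinearIndependent ℝ b) (R : ℝ) :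
    {x | x ∈ Submodule.span ℤ (Set.range b) ∧ enorm2 x ≤ R}.Finite := by
  have hB : ⊤ ≤ Submodule.span ℝ (Set.range b) :=
    (hb.span_eq_top_of_card_eq_finrank' (by simp)).ge
  have h := ZSpan.setFinite_inter (Module.Basis.mk hb hB)
    (s := Metric.closedBall 0 R) Metric.isBounded_closedBall
  rw [Module.Basis.coe_mk] at h
  refine h.subset ?_
  rintro x ⟨hx, hR⟩
  exact ⟨by simpa using (norm_le_enorm2 x).trans hR, hx⟩

/-- shortest lattice vector outside a proper subspace -/
lemma exists_next {n : ℕ} (b : Fin n → (Fin n → ℝ)) (hb : LinearIndependent ℝ b)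
    (S : Submodule ℝ (Fin n → ℝ)) : ∃ w, S ≠ ⊤ → w ∈ Submodule.span ℤ (Set.range b) ∧ w ∉ S ∧
      ∀ x ∈ Submodule.span ℤ (Set.range b), x ∉ S → enorm2 w ≤ enorm2 x := by
  by_cases hS : S = ⊤
  · exact ⟨0, fun h => absurd hS h⟩
  have hB : Submodule.span ℝ (Set.range b) = ⊤ :=
    hb.span_eq_top_of_card_eq_finrank' (by simp)
  obtain ⟨i, hi⟩ : ∃ i, b i ∉ S := by
    by_contra! hc
    apply hS
    rw [eq_top_iff, ← hB, Submodule.span_le]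
    rintro _ ⟨i, rfl⟩
    exact hc i
  have hiL : b i ∈ Submodule.span ℤ (Set.range b) := Submodule.subset_span ⟨i, rfl⟩
  have hfin := (finite_ball b hb (enorm2 (b i))).subset
    (t := {x | (x ∈ Submodule.span ℤ (Set.range b) ∧ enorm2 x ≤ enorm2 (b i)) ∧ x ∉ S})
    (fun x hx => hx.1)
  obtain ⟨w, hw, hmin⟩ := Set.exists_min_image _ enorm2 hfin ⟨b i, ⟨hiL, le_rfl⟩, hi⟩
  refine ⟨w, fun _ => ⟨hw.1.1, hw.2, fun x hx hxS => ?_⟩⟩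
  by_cases hle : enorm2 x ≤ enorm2 (b i)
  · exact hmin x ⟨⟨hx, hle⟩, hxS⟩
  · exact hw.1.2.trans (not_le.1 hle).le

/-- the flag obtained from a choice of next vectors -/
def flagOf {V : Type*} [AddCommGroup V] [Module ℝ V] (nx : Submodule ℝ V → V) :
    ℕ → Submodule ℝ V
  | 0 => ⊥
  | k + 1 => flagOf nx k ⊔ Submodule.span ℝ {nx (flagOf nx k)}

lemma mem_flag_succ {V : Type*} [AddCommGroup V] [Module ℝ V] (nx : Submodule ℝ V → V) (k : ℕ)
    (x : V) : x ∈ flagOf nx (k+1) ↔ ∃ y ∈ flagOf nx k, ∃ t : ℝ, y + t • nx (flagOf nx k) = x := by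
  rw [flagOf, Submodule.mem_sup]
  simp [Submodule.mem_span_singleton]

/-- one step: generator of the next layer -/
lemma exists_gen {n : ℕ} (b : Fin n → (Fin n → ℝ)) (hb : LinearIndependent ℝ b)
    (S : Submodule ℝ (Fin n → ℝ)) (w : Fin n → ℝ) (hw : w ∈ Submodule.span ℤ (Set.range b))
    (hwS : w ∉ S) (C : ℝ)
    (hC : ∀ y ∈ S, ∃ z ∈ Submodule.span ℤ (Set.range b), z ∈ S ∧ enorm2 (y - z) ≤ C) :
    ∃ v ∈ Submodule.span ℤ (Set.range b), v ∉ S ∧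
      (∀ x ∈ Submodule.span ℤ (Set.range b), (∃ y ∈ S, ∃ t : ℝ, y + t • w = x) →
        ∃ m : ℤ, x - m • v ∈ S) ∧
      (enorm2 v ≤ enorm2 w ∨ enorm2 v ≤ C + 1 / 2 * enorm2 w) := by
  set L := Submodule.span ℤ (Set.range b) with hL
  let T : AddSubgroup ℝ :=
    { carrier := {t | ∃ y ∈ S, y + t • w ∈ L}
      zero_mem' := ⟨0, S.zero_mem, by simp⟩
      add_mem' := by
        rintro s t ⟨y, hy, h⟩ ⟨y', hy', h'⟩
        refine ⟨y + y', S.add_mem hy hy', ?_⟩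
        have := L.add_mem h h'
        convert this using 1
        module
      neg_mem' := by
        rintro s ⟨y, hy, h⟩
        refine ⟨-y, S.neg_mem hy, ?_⟩
        have := L.neg_mem h
        convert this using 1
        module }
  have hT : ∀ t, t ∈ T ↔ ∃ y ∈ S, y + t • w ∈ L := fun t => Iff.rfl
  have h1 : (1:ℝ) ∈ T := ⟨0, S.zero_mem, by simpa using hw⟩
  -- reduced representatives
  have hred : ∀ t ∈ T, ∃ y ∈ S, y + t • w ∈ L ∧ enorm2 y ≤ C := by
    intro t ht
    obtain ⟨y, hy, h⟩ := ht
    obtain ⟨z, hz, hzS, hle⟩ := hC y hy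
    refine ⟨y - z, S.sub_mem hy hzS, ?_, hle⟩
    have := L.sub_mem h hz
    convert this using 1
    module
  have huniq : ∀ y ∈ S, ∀ y' ∈ S, ∀ t t' : ℝ, y + t • w = y' + t' • w → t = t' := by
    intro y hy y' hy' t t' h
    by_contra hne
    apply hwS
    have h2 : (t - t') • w ∈ S := by
      have : (t - t') • w = y' - y := by
        rw [sub_smul, sub_eq_sub_iff_add_eq_add, add_comm, h]
      rw [this]; exact S.sub_mem hy' hy
    exact (S.smul_mem_iff (sub_ne_zero.2 hne)).1 h2
  have hfin : {t | t ∈ T ∧ 0 < t ∧ t ≤ 1}.Finite := by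
    have hF := finite_ball b hb (C + enorm2 w)
    have hch : ∀ t : ℝ, ∃ x, t ∈ T ∧ 0 < t ∧ t ≤ 1 → x ∈ L ∧ enorm2 x ≤ C + enorm2 w ∧
        ∃ y ∈ S, y + t • w = x := by
      intro t
      by_cases ht : t ∈ T ∧ 0 < t ∧ t ≤ 1
      · obtain ⟨y, hy, h, hle⟩ := hred t ht.1
        refine ⟨y + t • w, fun _ => ⟨h, ?_, y, hy, rfl⟩⟩
        refine (enorm2_add_le _ _).trans (add_le_add hle ?_)
        rw [enorm2_smul, abs_of_pos ht.2.1]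
        exact mul_le_of_le_one_left (enorm2_nonneg _) ht.2.2
      · exact ⟨0, fun h => absurd h ht⟩
    choose f hf using hch
    refine Set.Finite.of_finite_image (f := f) (hF.subset ?_) ?_
    · rintro _ ⟨t, ht, rfl⟩
      exact ⟨(hf t ht).1, (hf t ht).2.1⟩
    · intro t ht t' ht' h
      obtain ⟨y, hy, e⟩ := (hf t ht).2.2
      obtain ⟨y', hy', e'⟩ := (hf t' ht').2.2
      exact huniq y hy y' hy' t t' (by rw [e, e', h])
  obtain ⟨t0, ht0, hmin⟩ := Set.exists_min_image _ id hfin ⟨1, h1, one_pos, le_rfl⟩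
  obtain ⟨ht0T, ht0pos, ht01⟩ := ht0
  have hleast : IsLeast {g : ℝ | g ∈ T ∧ 0 < g} t0 := by
    refine ⟨⟨ht0T, ht0pos⟩, ?_⟩
    rintro g ⟨hg, hgp⟩
    by_cases h : g ≤ 1
    · exact hmin g ⟨hg, hgp, h⟩
    · exact ht01.trans (not_le.1 h).le
  have hcyc := AddSubgroup.cyclic_of_min hleast
  have hmul : ∀ t ∈ T, ∃ m : ℤ, m • t0 = t := by
    intro t ht
    rw [hcyc] at ht
    exact AddSubgroup.mem_closure_singleton.1 ht
  have key : ∀ y ∈ S, y + t0 • w ∈ L → (y + t0 • w ∉ S ∧ 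
      (∀ x ∈ L, (∃ y ∈ S, ∃ t : ℝ, y + t • w = x) → ∃ m : ℤ, x - m • (y + t0 • w) ∈ S)) := by
    intro y hy hyL
    constructor
    · intro h
      have h2 := S.sub_mem h hy
      rw [add_sub_cancel_left] at h2
      exact hwS ((S.smul_mem_iff ht0pos.ne').1 h2)
    · rintro x hx ⟨y', hy', t, rfl⟩
      obtain ⟨m, rfl⟩ := hmul t ⟨y', hy', hx⟩
      refine ⟨m, ?_⟩
      have : y' + (m • t0) • w - m • (y + t0 • w) = y' - (m:ℝ) • y := by
        rw [zsmul_eq_mul, ← Int.cast_smul_eq_zsmul ℝ m]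
        module
      rw [this]
      exact S.sub_mem hy' (S.smul_mem _ hy)
  obtain ⟨m, hm⟩ := hmul 1 h1
  rw [zsmul_eq_mul] at hm
  have hmpos : (0:ℝ) < m := by
    by_contra hc
    have := mul_nonpos_of_nonpos_of_nonneg (not_lt.1 hc) ht0pos.le
    linarith
  have hm1 : 1 ≤ m := by exact_mod_cast hmpos
  rcases hm1.eq_or_lt with h | h
  · have ht1 : t0 = 1 := by rw [← h] at hm; simpa using hm
    have hk := key 0 S.zero_mem (by rw [ht1]; simpa using hw)
    rw [ht1] at hk
    simp only [one_smul, zero_add] at hk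
    exact ⟨w, hw, hk.1, hk.2, Or.inl le_rfl⟩
  · have hm2 : (2:ℝ) ≤ m := by exact_mod_cast h
    have hhalf : t0 ≤ 1 / 2 := by nlinarith
    obtain ⟨y, hy, hyL, hle⟩ := hred t0 ht0T
    refine ⟨y + t0 • w, hyL, (key y hy hyL).1, (key y hy hyL).2, Or.inr ?_⟩
    refine (enorm2_add_le _ _).trans (add_le_add hle ?_)
    rw [enorm2_smul, abs_of_pos ht0pos]
    exact mul_le_mul_of_nonneg_right hhalf (enorm2_nonneg _)

theorem stmt7 (n : ℕ) (hn : 0 < n)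
    -- a full-rank lattice in `ℝ^n` is the `ℤ`-span of an `ℝ`-basis `b`
    (b : Fin n → (Fin n → ℝ)) (hb : LinearIndependent ℝ b) :
    ∃ v : Fin n → (Fin n → ℝ),
      -- `v` is a `ℤ`-basis of the lattice
      LinearIndependent ℝ v ∧
      Submodule.span ℤ (Set.range v) = Submodule.span ℤ (Set.range b) ∧
      -- `λ_s ≤ |v^s|₂ ≤ max{1, s/2} λ_s` (here `v s` plays the role of `v^(s+1)`)
      ∀ s : Fin n,
        succMin (↑(Submodule.span ℤ (Set.range b)) : Set (Fin n → ℝ)) ((s : ℕ) + 1) ≤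
            enorm2 (v s) ∧
        enorm2 (v s) ≤ max 1 (((s : ℕ) + 1 : ℝ) / 2) *
            succMin (↑(Submodule.span ℤ (Set.range b)) : Set (Fin n → ℝ)) ((s : ℕ) + 1) := by
  set L := Submodule.span ℤ (Set.range b) with hL
  choose nx hnx using exists_next b hb
  rw [← hL] at hnx
  let S := flagOf nx
  let w : ℕ → Fin n → ℝ := fun k => nx (S k)
  have hS0 : S 0 = ⊥ := rfl
  have hSs : ∀ k x, x ∈ S (k+1) ↔ ∃ y ∈ S k, ∃ t : ℝ, y + t • w k = x := mem_flag_succ nx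
  have hSm : ∀ k, S k ≤ S (k+1) := fun k => le_sup_left
  have hSmono : Monotone S := monotone_nat_of_le_succ hSm
  have hwS : ∀ k, w k ∈ S (k+1) := fun k => (hSs k _).2 ⟨0, zero_mem _, 1, by simp⟩
  have hSspan : ∀ k, S k = Submodule.span ℝ (Set.range (fun i : Fin k => w i)) := by
    intro k
    apply le_antisymm
    · induction k with
      | zero => rw [hS0]; exact bot_le
      | succ k ih =>
        refine sup_le (ih.trans (Submodule.span_mono ?_)) (Submodule.span_mono ?_)
        · rintro _ ⟨i, rfl⟩
          exact ⟨i.castSucc, rfl⟩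
        · rintro _ rfl
          exact ⟨Fin.last k, rfl⟩
    · rw [Submodule.span_le]
      rintro _ ⟨i, rfl⟩
      exact hSmono i.2 (hwS i)
  have hrank_le : ∀ k, Module.finrank ℝ (S k) ≤ k := by
    intro k
    rw [hSspan k]
    have h := finrank_range_le_card (R := ℝ) (fun i : Fin k => w i)
    rw [Fintype.card_fin] at h
    exact h
  have hne : ∀ k, k < n → S k ≠ ⊤ := by
    intro k hk h
    have := hrank_le k
    rw [h, finrank_top] at this
    simp at this
    omega
  have hwL : ∀ k, k < n → w k ∈ L := fun k hk => (hnx _ (hne k hk)).1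
  have hwn : ∀ k, k < n → w k ∉ S k := fun k hk => (hnx _ (hne k hk)).2.1
  have hwmin : ∀ k, k < n → ∀ x ∈ L, x ∉ S k → enorm2 (w k) ≤ enorm2 x :=
    fun k hk => (hnx _ (hne k hk)).2.2
  have hmono : ∀ i k, i ≤ k → k < n → enorm2 (w i) ≤ enorm2 (w k) := fun i k hik hk =>
    hwmin i (by omega) _ (hwL k hk) (fun h => hwn k hk (hSmono hik h))
  have hrank : ∀ k, k ≤ n → k ≤ Module.finrank ℝ (S k) := by
    intro k
    induction k with
    | zero => simp
    | succ k ih =>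
      intro hk
      have h1 := ih (by omega)
      have : S k < S (k+1) := lt_of_le_of_ne (hSm k) (fun h => hwn k (by omega) (h ▸ hwS k))
      have := Submodule.finrank_lt_finrank_of_lt this
      omega
  have hind : ∀ k, k ≤ n → LinearIndependent ℝ (fun i : Fin k => w i) := by
    intro k hk
    rw [linearIndependent_iff_card_le_finrank_span, Set.finrank, ← hSspan k]
    simpa using hrank k hk
  have hTop : S n = ⊤ := by
    apply Submodule.eq_top_of_finrank_eq
    have := hrank n le_rfl
    have := hrank_le n
    simp
    omega
  have hsucc : ∀ k, k < n → succMin (L : Set (Fin n → ℝ)) (k+1) = enorm2 (w k) := by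
    intro k hk
    have hmem : enorm2 (w k) ∈ {r : ℝ | 0 < r ∧ ∃ w : Fin (k+1) → Fin n → ℝ,
        (∀ k, w k ∈ (L : Set (Fin n → ℝ))) ∧ LinearIndependent ℝ w ∧ ∀ k, enorm2 (w k) ≤ r} := by
      refine ⟨enorm2_pos (fun h => hwn k hk (h ▸ zero_mem _)), fun i => w i,
        fun i => hwL i (by omega), hind (k+1) hk, fun i => hmono i k (by omega) hk⟩
    apply le_antisymm
    · exact csInf_le ⟨0, fun r hr => hr.1.le⟩ hmem
    · apply le_csInf ⟨_, hmem⟩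
      rintro r ⟨_, u, huL, hu, hur⟩
      obtain ⟨i, hi⟩ : ∃ i, u i ∉ S k := by
        by_contra! hc
        have h1 : Submodule.span ℝ (Set.range u) ≤ S k := by
          rw [Submodule.span_le]; rintro _ ⟨i, rfl⟩; exact hc i
        have h2 := Submodule.finrank_mono h1
        rw [finrank_span_eq_card hu] at h2
        have := hrank_le k
        simp at h2
        omega
      exact (hwmin k hk _ (huL i) hi).trans (hur i)
  have happ : ∀ k, k ≤ n → ∀ y ∈ S k, ∃ z ∈ L, z ∈ S k ∧
      enorm2 (y - z) ≤ ∑ j ∈ Finset.range k, 1 / 2 * enorm2 (w j) := by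
    intro k
    induction k with
    | zero =>
      intro _ y hy
      rw [hS0, Submodule.mem_bot] at hy
      exact ⟨0, zero_mem _, zero_mem _, by simp [hy, enorm2]⟩
    | succ k ih =>
      intro hk y hy
      obtain ⟨y', hy', t, rfl⟩ := (hSs k y).1 hy
      obtain ⟨z, hz, hzS, hle⟩ := ih (by omega) y' hy'
      refine ⟨z + (round t) • w k, add_mem hz (L.smul_mem _ (hwL k hk)), ?_, ?_⟩
      · rw [← Int.cast_smul_eq_zsmul ℝ]
        exact add_mem (hSm k hzS) (Submodule.smul_mem _ _ (hwS k))
      · have : y' + t • w k - (z + (round t) • w k) = (y' - z) + (t - round t) • w k := by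
          rw [← Int.cast_smul_eq_zsmul ℝ]
          module
        rw [this, Finset.sum_range_succ]
        refine (enorm2_add_le _ _).trans (add_le_add hle ?_)
        rw [enorm2_smul]
        exact mul_le_mul_of_nonneg_right (abs_sub_round t) (enorm2_nonneg _)
  have hv : ∀ k : Fin n, ∃ v ∈ L, v ∉ S k ∧ (∀ x ∈ L, x ∈ S (k+1) → ∃ m : ℤ, x - m • v ∈ S k) ∧
      enorm2 v ≤ max 1 (((k : ℕ) + 1 : ℝ) / 2) * enorm2 (w k) := by
    intro k
    obtain ⟨v, h1, h2, h3, h4⟩ := exists_gen b hb (S k) (w k) (hwL k k.2) (hwn k k.2) _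
      (happ k k.2.le)
    refine ⟨v, h1, h2, fun x hx hxS => h3 x hx ((hSs k x).1 hxS), ?_⟩
    have hw0 := enorm2_nonneg (w k)
    rcases h4 with h4 | h4
    · refine h4.trans (le_mul_of_one_le_left hw0 (le_max_left _ _))
    · refine h4.trans (le_trans ?_ (mul_le_mul_of_nonneg_right (le_max_right _ _) hw0))
      have : ∑ j ∈ Finset.range k, 1 / 2 * enorm2 (w j) ≤
          ∑ j ∈ Finset.range (k:ℕ), 1 / 2 * enorm2 (w k) := by
        apply Finset.sum_le_sum
        intro j hj
        have := hmono j k (Finset.mem_range.1 hj).le k.2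
        linarith
      rw [Finset.sum_const, Finset.card_range, nsmul_eq_mul] at this
      linarith
  choose v hvL hvS hvgen hvle using hv
  have hLv : ∀ k, k ≤ n → ∀ x ∈ L, x ∈ S k → x ∈ Submodule.span ℤ (Set.range v) := by
    intro k
    induction k with
    | zero =>
      intro _ x _ hx
      rw [hS0, Submodule.mem_bot] at hx
      rw [hx]; exact zero_mem _
    | succ k ih =>
      intro hk x hx hxS
      obtain ⟨m, hm⟩ := hvgen ⟨k, hk⟩ x hx hxS
      have h1 := ih (by omega) _ (L.sub_mem hx (L.smul_mem m (hvL ⟨k, hk⟩))) hm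
      have h2 : m • v ⟨k, hk⟩ ∈ Submodule.span ℤ (Set.range v) :=
        Submodule.smul_mem _ _ (Submodule.subset_span ⟨_, rfl⟩)
      simpa using add_mem h1 h2
  have hspan : Submodule.span ℤ (Set.range v) = L := by
    apply le_antisymm
    · rw [Submodule.span_le]; rintro _ ⟨i, rfl⟩; exact hvL i
    · intro x hx
      exact hLv n le_rfl x hx (hTop ▸ Submodule.mem_top)
  refine ⟨v, ?_, hspan, ?_⟩
  · apply linearIndependent_of_top_le_span_of_card_eq_finrank _ (by simp)
    rw [← hb.span_eq_top_of_card_eq_finrank' (by simp), Submodule.span_le]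
    rintro _ ⟨i, rfl⟩
    have h1 : b i ∈ Submodule.span ℤ (Set.range v) := by
      rw [hspan]; exact Submodule.subset_span ⟨i, rfl⟩
    exact Submodule.span_subset_span ℤ ℝ _ h1
  · intro s
    rw [hsucc s s.2]
    exact ⟨hwmin s s.2 _ (hvL s) (hvS s), hvle s⟩
end

section
/- Let Λ be a lattice of full rank in ℝ^n with successive minima λ_1 ≤ … ≤ λ_n. Then there exist a constant c₀ > 0 depending only on n and a ℤ-basis v^1,…,v^n of Λ such that (i) |v^s|_2 ≤ c₀ λ_s for all s = 1,…,n, and (ii) I(v^s) ⊆ I(v^{s+1}) for s = 1,…,n−1, where I(v) := {h ∈ {1,…,n} : v_h ≠ 0}. -/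
/-- The support `I(v) = {h : v_h ≠ 0}` of a vector. -/
def Iset {ι : Type*} (v : ι → ℝ) : Set ι := {h | v h ≠ 0}

theorem aux_enorm2_eq {n : ℕ} (v : Fin n → ℝ) :
    enorm2 v = ‖(WithLp.toLp 2 v : EuclideanSpace ℝ (Fin n))‖ := by
  rw [EuclideanSpace.norm_eq]
  simp [enorm2]

theorem aux_enorm2_add {n : ℕ} (v w : Fin n → ℝ) : enorm2 (v + w) ≤ enorm2 v + enorm2 w := by
  simp only [aux_enorm2_eq, WithLp.toLp_add]
  exact norm_add_le _ _

theorem aux_enorm2_smul {n : ℕ} (c : ℝ) (v : Fin n → ℝ) : enorm2 (c • v) = |c| * enorm2 v := by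
  simp only [aux_enorm2_eq, WithLp.toLp_smul, norm_smul, Real.norm_eq_abs]

theorem aux_enorm2_nonneg {n : ℕ} (v : Fin n → ℝ) : 0 ≤ enorm2 v := Real.sqrt_nonneg _

theorem aux_enorm2_sum {n : ℕ} {ι : Type*} (s : Finset ι) (f : ι → Fin n → ℝ) :
    enorm2 (∑ i ∈ s, f i) ≤ ∑ i ∈ s, enorm2 (f i) := by
  classical
  induction s using Finset.induction_on with
  | empty => simp [enorm2]
  | insert a s ha ih =>
    rw [Finset.sum_insert ha, Finset.sum_insert ha]
    exact (aux_enorm2_add _ _).trans (by linarith)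

theorem aux_norm_le {n : ℕ} (v : Fin n → ℝ) : ‖v‖ ≤ enorm2 v := by
  rw [pi_norm_le_iff_of_nonneg (aux_enorm2_nonneg v)]
  intro i
  rw [Real.norm_eq_abs]
  apply Real.abs_le_sqrt
  exact Finset.single_le_sum (f := fun i => v i ^ 2) (fun j _ => sq_nonneg _) (Finset.mem_univ i)

/-- bounded parts of the lattice are finite -/
theorem aux_finite {n : ℕ} (b : Fin n → Fin n → ℝ) (hb : LinearIndependent ℝ b)
    {S : Set (Fin n → ℝ)} (hS : Bornology.IsBounded S) :
    (S ∩ (Submodule.span ℤ (Set.range b) : Set (Fin n → ℝ))).Finite := by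
  rcases Nat.eq_zero_or_pos n with rfl | hn
  · exact Set.toFinite _
  have : Nonempty (Fin n) := ⟨⟨0, hn⟩⟩
  have h := ZSpan.setFinite_inter (basisOfLinearIndependentOfCardEqFinrank hb (by simp)) hS
  rwa [coe_basisOfLinearIndependentOfCardEqFinrank] at h

theorem aux_eps {n : ℕ} (b : Fin n → Fin n → ℝ) (hb : LinearIndependent ℝ b) :
    ∃ ε : ℝ, 0 < ε ∧ ∀ x ∈ Submodule.span ℤ (Set.range b), x ≠ 0 → ε ≤ enorm2 x := by
  have hf := aux_finite b hb (Metric.isBounded_closedBall (x := (0 : Fin n → ℝ)) (r := 1))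
  set T := (Metric.closedBall (0 : Fin n → ℝ) 1 ∩
    (Submodule.span ℤ (Set.range b) : Set (Fin n → ℝ))) \ {0} with hT
  have hTf : T.Finite := hf.subset Set.sdiff_subset
  rcases T.eq_empty_or_nonempty with hE | hE
  · refine ⟨1, one_pos, fun x hx hx0 => ?_⟩
    by_contra hlt
    push Not at hlt
    have : x ∈ T := ⟨⟨by simpa using ((aux_norm_le x).trans hlt.le), hx⟩, hx0⟩
    rw [hE] at this
    exact this
  · obtain ⟨y, hy, hmin⟩ := T.exists_min_image (fun x => ‖x‖) hTf hE
    have hy0 : 0 < ‖y‖ := norm_pos_iff.2 hy.2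
    have hy1 : ‖y‖ ≤ 1 := by simpa using hy.1.1
    refine ⟨‖y‖, hy0, fun x hx hx0 => ?_⟩
    refine le_trans ?_ (aux_norm_le x)
    by_contra hlt
    push Not at hlt
    have := hmin x ⟨⟨by simpa using (hlt.le.trans hy1), hx⟩, hx0⟩
    linarith

theorem aux_nonempty {n : ℕ} (b : Fin n → Fin n → ℝ) (hb : LinearIndependent ℝ b) (s : ℕ)
    (hs : s ≤ n) :
    {r : ℝ | 0 < r ∧ ∃ w : Fin s → Fin n → ℝ,
      (∀ k, w k ∈ (↑(Submodule.span ℤ (Set.range b)) : Set (Fin n → ℝ))) ∧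
        LinearIndependent ℝ w ∧ ∀ k, enorm2 (w k) ≤ r}.Nonempty := by
  refine ⟨1 + ∑ i, enorm2 (b i), ?_, fun k => b (Fin.castLE hs k), ?_, ?_, ?_⟩
  · have := Finset.sum_nonneg (s := Finset.univ) fun i _ => aux_enorm2_nonneg (b i)
    linarith
  · intro k
    exact Submodule.subset_span ⟨_, rfl⟩
  · exact hb.comp _ (Fin.castLE_injective hs)
  · intro k
    have := Finset.single_le_sum (f := fun i => enorm2 (b i))
      (fun j _ => aux_enorm2_nonneg (b j)) (Finset.mem_univ (Fin.castLE hs k))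
    linarith

theorem aux_mono {n : ℕ} (b : Fin n → Fin n → ℝ) (hb : LinearIndependent ℝ b) (s t : ℕ)
    (hst : s ≤ t) (ht : t ≤ n) :
    succMin (↑(Submodule.span ℤ (Set.range b)) : Set (Fin n → ℝ)) s ≤
    succMin (↑(Submodule.span ℤ (Set.range b)) : Set (Fin n → ℝ)) t := by
  apply csInf_le_csInf
  · exact ⟨0, fun r hr => hr.1.le⟩
  · exact aux_nonempty b hb t ht
  · rintro r ⟨hr, w, h1, h2, h3⟩
    exact ⟨hr, fun k => w (Fin.castLE hst k), fun k => h1 _,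
      h2.comp _ (Fin.castLE_injective hst), fun k => h3 _⟩

theorem aux_pos {n : ℕ} (b : Fin n → Fin n → ℝ) (hb : LinearIndependent ℝ b) (s : ℕ)
    (hs : s + 1 ≤ n) :
    0 < succMin (↑(Submodule.span ℤ (Set.range b)) : Set (Fin n → ℝ)) (s + 1) := by
  obtain ⟨ε, hε, h⟩ := aux_eps b hb
  refine lt_of_lt_of_le hε ?_
  apply le_csInf (aux_nonempty b hb _ hs)
  rintro r ⟨hr, w, h1, h2, h3⟩
  exact (h (w 0) (h1 0) (h2.ne_zero 0)).trans (h3 0)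

theorem aux_greedy {n : ℕ} (b : Fin n → Fin n → ℝ) (hb : LinearIndependent ℝ b) (m : ℕ)
    (hm : m ≤ n) : ∃ w : Fin m → Fin n → ℝ, LinearIndependent ℝ w ∧
      (∀ i, w i ∈ Submodule.span ℤ (Set.range b)) ∧
      ∀ i, enorm2 (w i) ≤
        2 * succMin (↑(Submodule.span ℤ (Set.range b)) : Set (Fin n → ℝ)) ((i : ℕ) + 1) := by
  induction m with
  | zero => exact ⟨fun i => i.elim0, linearIndependent_empty_type, fun i => i.elim0,
      fun i => i.elim0⟩
  | succ m ih =>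
    obtain ⟨w, hw, hL, hn⟩ := ih (by omega)
    have hpos := aux_pos b hb m hm
    have hlt : succMin (↑(Submodule.span ℤ (Set.range b)) : Set (Fin n → ℝ)) (m + 1) <
      2 * succMin (↑(Submodule.span ℤ (Set.range b)) : Set (Fin n → ℝ)) (m + 1) := by linarith
    obtain ⟨r, ⟨hr, u, hu1, hu2, hu3⟩, hr2⟩ :=
      exists_lt_of_csInf_lt (aux_nonempty b hb (m + 1) hm) hlt
    have : ∃ k, u k ∉ Submodule.span ℝ (Set.range w) := by
      by_contra hcon
      push Not at hcon
      have hle : Submodule.span ℝ (Set.range u) ≤ Submodule.span ℝ (Set.range w) := by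
        rw [Submodule.span_le]
        rintro _ ⟨k, rfl⟩
        exact hcon k
      have := Submodule.finrank_mono hle
      rw [finrank_span_eq_card hu2, finrank_span_eq_card hw] at this
      simp at this
    obtain ⟨k, hk⟩ := this
    refine ⟨Fin.snoc w (u k), linearIndependent_finSnoc.2 ⟨hw, hk⟩, ?_, ?_⟩
    · intro i
      refine Fin.lastCases ?_ (fun i => ?_) i
      · simpa using hu1 k
      · simpa using hL i
    · intro i
      refine Fin.lastCases ?_ (fun i => ?_) i
      · simpa using (hu3 k).trans hr2.le
      · simpa using hn i

/-- reduce coefficients below `s` modulo the `w i`. -/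
theorem aux_reduce {n : ℕ} (L : Submodule ℤ (Fin n → ℝ)) (W : Module.Basis (Fin n) ℝ (Fin n → ℝ))
    (hW : ∀ i, W i ∈ L) (s : Fin n) (x : Fin n → ℝ) (hx : x ∈ L) :
    ∃ y ∈ L, (∀ i, s ≤ i → W.repr y i = W.repr x i) ∧
      ∀ i, i < s → 0 ≤ W.repr y i ∧ W.repr y i ≤ 1 := by
  refine ⟨x - ∑ i, (if i < s then ⌊W.repr x i⌋ else 0) • W i, ?_, ?_, ?_⟩
  · exact L.sub_mem hx (L.sum_mem fun i _ => L.smul_mem _ (hW i))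
  all_goals
    have key : ∀ i, W.repr (x - ∑ i, (if i < s then ⌊W.repr x i⌋ else 0) • W i) i =
        W.repr x i - ((if i < s then ⌊W.repr x i⌋ else 0 : ℤ) : ℝ) := by
      intro i
      have : ∑ i, (if i < s then ⌊W.repr x i⌋ else 0) • W i =
          ∑ i, (((if i < s then ⌊W.repr x i⌋ else 0 : ℤ) : ℝ)) • W i := by
        refine Finset.sum_congr rfl fun j _ => ?_
        rw [Int.cast_smul_eq_zsmul]
      rw [this, map_sub, Finsupp.sub_apply, W.repr_sum_self]
    intro i hi
    rw [key i]
  · rw [if_neg (not_lt.2 hi)]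
    simp
  · rw [if_pos hi]
    exact ⟨Int.fract_nonneg _, (Int.fract_lt_one _).le⟩

theorem aux_min {n : ℕ} (b : Fin n → Fin n → ℝ) (hb : LinearIndependent ℝ b)
    (W : Module.Basis (Fin n) ℝ (Fin n → ℝ))
    (hW : ∀ i, W i ∈ Submodule.span ℤ (Set.range b)) (s : Fin n) :
    ∃ u ∈ Submodule.span ℤ (Set.range b), (∀ i, s < i → W.repr u i = 0) ∧
      enorm2 u ≤ ∑ i ∈ Finset.Iic s, enorm2 (W i) ∧
      ∀ x ∈ Submodule.span ℤ (Set.range b), (∀ i, s < i → W.repr x i = 0) →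
        ∃ k : ℤ, W.repr x s = k * W.repr u s := by
  set L := Submodule.span ℤ (Set.range b) with hL
  have hbound : ∀ x : Fin n → ℝ, (∀ i, s < i → W.repr x i = 0) →
      (∀ i, i ≤ s → 0 ≤ W.repr x i ∧ W.repr x i ≤ 1) →
      enorm2 x ≤ ∑ i ∈ Finset.Iic s, enorm2 (W i) := by
    intro x h1 h2
    have : x = ∑ i ∈ Finset.Iic s, W.repr x i • W i := by
      conv_lhs => rw [← W.sum_repr x]
      symm
      apply Finset.sum_subset (Finset.subset_univ _)
      intro i _ hi
      rw [h1 i (by simpa using hi), zero_smul]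
    conv_lhs => rw [this]
    refine (aux_enorm2_sum _ _).trans (Finset.sum_le_sum fun i hi => ?_)
    have h := h2 i (by simpa using hi)
    rw [aux_enorm2_smul, abs_of_nonneg h.1]
    nlinarith [aux_enorm2_nonneg (W i)]
  set T : Set (Fin n → ℝ) := {x | x ∈ L ∧ (∀ i, s < i → W.repr x i = 0) ∧
      (∀ i, i ≤ s → 0 ≤ W.repr x i ∧ W.repr x i ≤ 1) ∧ 0 < W.repr x s} with hT
  have hTf : T.Finite := by
    refine (aux_finite b hb (Metric.isBounded_closedBall (x := (0 : Fin n → ℝ))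
      (r := ∑ i ∈ Finset.Iic s, enorm2 (W i)))).subset ?_
    rintro x ⟨h1, h2, h3, -⟩
    refine ⟨?_, h1⟩
    simpa using (aux_norm_le x).trans (hbound x h2 h3)
  have hTn : T.Nonempty := by
    refine ⟨W s, hW s, ?_, ?_, ?_⟩
    · intro i hi
      simp [Finsupp.single_apply, hi.ne]
    · intro i hi
      simp only [W.repr_self, Finsupp.single_apply]
      split_ifs <;> simp
    · simp
  obtain ⟨u, ⟨hu1, hu2, hu3, hu4⟩, hmin⟩ := T.exists_min_image (fun x => W.repr x s) hTf hTn
  refine ⟨u, hu1, hu2, hbound u hu2 hu3, fun x hx hx0 => ?_⟩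
  set k : ℤ := ⌊W.repr x s / W.repr u s⌋ with hk
  refine ⟨k, ?_⟩
  set α := W.repr u s with hα
  have hk1 : (k : ℝ) * α ≤ W.repr x s := by
    have := Int.floor_le (W.repr x s / α)
    rwa [le_div_iff₀ hu4] at this
  have hk2 : W.repr x s < (k + 1) * α := by
    have := Int.lt_floor_add_one (W.repr x s / α)
    rwa [div_lt_iff₀ hu4] at this
  obtain ⟨y, hy, hy1, hy2⟩ := aux_reduce L W hW s (x - k • u) (L.sub_mem hx (L.smul_mem _ hu1))
  have hrep : ∀ i, W.repr (x - k • u) i = W.repr x i - k * W.repr u i := by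
    intro i
    rw [← Int.cast_smul_eq_zsmul ℝ, map_sub, map_smul]
    simp
  by_contra hne
  have hys : W.repr y s = W.repr x s - k * α := by rw [hy1 s le_rfl, hrep]
  have hlt : 0 < W.repr y s := by
    rw [hys]
    exact sub_pos.2 (lt_of_le_of_ne hk1 (Ne.symm hne))
  have hα1 : α ≤ 1 := (hu3 s le_rfl).2
  have hyT : y ∈ T := by
    refine ⟨hy, ?_, ?_, hlt⟩
    · intro i hi
      rw [hy1 i hi.le, hrep, hx0 i hi, hu2 i hi]
      simp
    · intro i hi
      rcases hi.lt_or_eq with h | rfl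
      · exact hy2 i h
      · exact ⟨hlt.le, by rw [hys]; nlinarith⟩
  have := hmin y hyT
  simp only [hys] at this
  nlinarith

theorem aux_gen {n : ℕ} (L : Submodule ℤ (Fin n → ℝ)) (W : Module.Basis (Fin n) ℝ (Fin n → ℝ))
    (v : Fin n → Fin n → ℝ) (hv : ∀ s, v s ∈ L) (hv0 : ∀ s i, s < i → W.repr (v s) i = 0)
    (hk : ∀ s, ∀ x ∈ L, (∀ i, s < i → W.repr x i = 0) →
        ∃ k : ℤ, W.repr x s = k * W.repr (v s) s) (m : ℕ) (hm : m ≤ n) :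
    ∀ x ∈ L, (∀ i : Fin n, m ≤ (i : ℕ) → W.repr x i = 0) →
      x ∈ Submodule.span ℤ (Set.range v) := by
  induction m with
  | zero =>
    intro x _ h0
    have : x = 0 := by
      apply W.ext_elem
      intro i
      simpa using h0 i (Nat.zero_le _)
    rw [this]
    exact Submodule.zero_mem _
  | succ m ih =>
    intro x hx h0
    obtain ⟨k, hk⟩ := hk ⟨m, hm⟩ x hx (fun i hi => h0 i hi)
    have hrep : ∀ i, W.repr (x - k • v ⟨m, hm⟩) i = W.repr x i - k * W.repr (v ⟨m, hm⟩) i := by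
      intro i
      rw [← Int.cast_smul_eq_zsmul ℝ, map_sub, map_smul]
      simp
    have := ih (by omega) (x - k • v ⟨m, hm⟩) (L.sub_mem hx (L.smul_mem _ (hv _))) (by
      intro i hi
      rw [hrep]
      rcases hi.lt_or_eq with h | h
      · rw [h0 i h, hv0 _ i h]
        simp
      · have : i = ⟨m, hm⟩ := Fin.ext h.symm
        rw [this, hk, sub_self])
    have h2 := Submodule.add_mem _ this
      (Submodule.smul_mem _ k (Submodule.subset_span (Set.mem_range_self (f := v) ⟨m, hm⟩)))
    simpa using h2

theorem aux_supp {n : ℕ} (a p : Fin n → ℝ) :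
    ∃ k : ℕ, k ≤ n ∧ Iset p ⊆ Iset (a + (k : ℝ) • p) := by
  by_contra hcon
  push Not at hcon
  have h : ∀ k : Fin (n + 1), ∃ h : Fin n, p h ≠ 0 ∧ a h + (k : ℕ) * p h = 0 := by
    intro k
    have := hcon k (Nat.lt_succ_iff.1 k.2)
    rw [Set.not_subset] at this
    obtain ⟨h, h1, h2⟩ := this
    refine ⟨h, h1, ?_⟩
    simpa [Iset] using h2
  choose f hf1 hf2 using h
  obtain ⟨i, j, hij, he⟩ := Fintype.exists_ne_map_eq_of_card_lt f (by simp)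
  apply hij
  have h1 := hf2 i
  have h2 := hf2 j
  rw [← he] at h2
  have : ((i : ℕ) : ℝ) * p (f i) = ((j : ℕ) : ℝ) * p (f i) := by linarith
  have := mul_right_cancel₀ (hf1 i) this
  exact Fin.ext (by exact_mod_cast this)

theorem aux_chain {n : ℕ} (u : ℕ → Fin n → ℝ) : ∃ v : ℕ → Fin n → ℝ, v 0 = u 0 ∧
    ∀ s, ∃ k : ℕ, k ≤ n ∧ v (s + 1) = u (s + 1) + (k : ℝ) • v s ∧ Iset (v s) ⊆ Iset (v (s + 1)) := by
  choose K hK1 hK2 using aux_supp (n := n)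
  refine ⟨fun s => Nat.rec (u 0) (fun s p => u (s + 1) + (K (u (s + 1)) p : ℝ) • p) s, rfl, ?_⟩
  intro s
  exact ⟨_, hK1 _ _, rfl, hK2 _ _⟩

theorem stmt8 (n : ℕ) (hn : 0 < n) :
    ∃ c₀ : ℝ, 0 < c₀ ∧
      -- a full-rank lattice in `ℝ^n` is the `ℤ`-span of an `ℝ`-basis `b`
      ∀ b : Fin n → (Fin n → ℝ), LinearIndependent ℝ b →
        ∃ v : Fin n → (Fin n → ℝ),
          -- `v` is a `ℤ`-basis of the lattice
          LinearIndependent ℝ v ∧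
          Submodule.span ℤ (Set.range v) = Submodule.span ℤ (Set.range b) ∧
          -- (i) `|v^s|₂ ≤ c₀ λ_s` (here `v s` plays the role of `v^(s+1)`)
          (∀ s : Fin n, enorm2 (v s) ≤
            c₀ * succMin (↑(Submodule.span ℤ (Set.range b)) : Set (Fin n → ℝ)) ((s : ℕ) + 1)) ∧
          -- (ii) `I(v^s) ⊆ I(v^(s+1))`
          (∀ (s : ℕ) (h1 : s < n) (h2 : s + 1 < n),
            Iset (v ⟨s, h1⟩) ⊆ Iset (v ⟨s + 1, h2⟩)) := by
  refine ⟨2 * n * (n + 1) ^ n, by positivity, fun b hb => ?_⟩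
  set L := Submodule.span ℤ (Set.range b) with hLdef
  obtain ⟨w, hw, hwL, hwn⟩ := aux_greedy b hb n le_rfl
  have : Nonempty (Fin n) := ⟨⟨0, hn⟩⟩
  set W := basisOfLinearIndependentOfCardEqFinrank hw (by simp) with hWdef
  have hWw : ∀ i, W i = w i := fun i => by
    rw [hWdef, coe_basisOfLinearIndependentOfCardEqFinrank]
  have hWL : ∀ i, W i ∈ L := fun i => by rw [hWw]; exact hwL i
  choose u hu1 hu2 hu3 hu4 using aux_min b hb W hWL
  set lam : ℕ → ℝ := fun s => succMin (↑L : Set (Fin n → ℝ)) (s + 1) with hlam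
  have hun : ∀ s : Fin n, enorm2 (u s) ≤ 2 * n * lam s := by
    intro s
    refine (hu3 s).trans ?_
    have h1 : ∀ i ∈ Finset.Iic s, enorm2 (W i) ≤ 2 * lam s := by
      intro i hi
      have hi' : i ≤ s := by simpa using hi
      rw [hWw]
      refine (hwn i).trans ?_
      have := aux_mono b hb (i + 1) (s + 1) (Nat.succ_le_succ hi') s.2
      simp only [hlam]
      linarith
    refine (Finset.sum_le_card_nsmul _ _ _ h1).trans ?_
    have hpos : 0 < lam s := aux_pos b hb s s.2
    have hc : ((Finset.Iic s).card : ℝ) ≤ n := by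
      have := Finset.card_le_univ (Finset.Iic s)
      rw [Fintype.card_fin] at this
      exact_mod_cast this
    rw [nsmul_eq_mul]
    nlinarith
  obtain ⟨v, hv0, hvs⟩ := aux_chain (fun s => if h : s < n then u ⟨s, h⟩ else 0)
  have main : ∀ s (h : s < n), v s ∈ L ∧ (∀ i : Fin n, s < (i : ℕ) → W.repr (v s) i = 0) ∧
      W.repr (v s) ⟨s, h⟩ = W.repr (u ⟨s, h⟩) ⟨s, h⟩ ∧
      enorm2 (v s) ≤ 2 * n * (n + 1) ^ s * lam s := by
    intro s
    induction s with
    | zero =>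
      intro h
      simp only [h, dif_pos] at hv0
      rw [hv0]
      exact ⟨hu1 _, fun i hi => hu2 _ i hi, rfl, by simpa using hun ⟨0, h⟩⟩
    | succ s ih =>
      intro h
      obtain ⟨i1, i2, i3, i4⟩ := ih (by omega)
      obtain ⟨k, hk, hv, -⟩ := hvs s
      simp only [h, dif_pos] at hv
      rw [hv]
      refine ⟨?_, ?_, ?_, ?_⟩
      · refine L.add_mem (hu1 _) ?_
        rw [Nat.cast_smul_eq_nsmul]
        exact L.nsmul_mem i1 k
      · intro i hi
        rw [map_add, map_smul, Finsupp.add_apply, Finsupp.smul_apply, hu2 _ i hi, i2 i (by omega)]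
        simp
      · rw [map_add, map_smul, Finsupp.add_apply, Finsupp.smul_apply, i2 _ (Nat.lt_succ_self s)]
        simp
      · refine (aux_enorm2_add _ _).trans ?_
        rw [aux_enorm2_smul, Nat.abs_cast]
        have h1 : enorm2 (u ⟨s + 1, h⟩) ≤ 2 * n * lam (s + 1) := hun ⟨s + 1, h⟩
        have hmono : lam s ≤ lam (s + 1) := aux_mono b hb (s + 1) (s + 1 + 1) (by omega) h
        have hpos : 0 < lam (s + 1) := aux_pos b hb (s + 1) h
        have hkn : (k : ℝ) ≤ n := by exact_mod_cast hk
        have hP : (1 : ℝ) ≤ (n + 1) ^ s := one_le_pow₀ (by linarith [Nat.cast_nonneg (α := ℝ) n])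
        have hn0 : (0 : ℝ) ≤ n := Nat.cast_nonneg n
        have h2 : enorm2 (v s) ≤ 2 * n * (n + 1) ^ s * lam (s + 1) :=
          i4.trans (mul_le_mul_of_nonneg_left hmono (by positivity))
        have h3 : (k : ℝ) * enorm2 (v s) ≤ n * (2 * n * (n + 1) ^ s * lam (s + 1)) :=
          mul_le_mul hkn h2 (aux_enorm2_nonneg _) hn0
        have h4 : 2 * n * lam (s + 1) * 1 ≤ 2 * n * lam (s + 1) * (n + 1) ^ s :=
          mul_le_mul_of_nonneg_left hP (by positivity)
        rw [pow_succ]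
        linarith
  have hspan : Submodule.span ℤ (Set.range fun s : Fin n => v s) = L := by
    apply le_antisymm
    · rw [Submodule.span_le]
      rintro _ ⟨s, rfl⟩
      exact (main s s.2).1
    · intro x hx
      refine aux_gen L W (fun s : Fin n => v s) (fun s => (main s s.2).1)
        (fun s i hi => (main s s.2).2.1 i hi) ?_ n le_rfl x hx (fun i hi => absurd i.2 (by omega))
      intro s y hy hy0
      obtain ⟨k, hk⟩ := hu4 s y hy hy0
      refine ⟨k, ?_⟩
      rw [hk, ← (main s s.2).2.2.1]
  refine ⟨fun s => v s, ?_, hspan, ?_, ?_⟩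
  · apply linearIndependent_of_top_le_span_of_card_eq_finrank _ (by simp)
    rw [← W.span_eq, Submodule.span_le]
    rintro _ ⟨i, rfl⟩
    have : W i ∈ Submodule.span ℤ (Set.range fun s : Fin n => v s) := by
      rw [hspan]
      exact hWL i
    exact Submodule.span_le_restrictScalars ℤ ℝ _ this
  · intro s
    refine (main s s.2).2.2.2.trans ?_
    have hpos : 0 < lam s := aux_pos b hb s s.2
    refine mul_le_mul_of_nonneg_right ?_ hpos.le
    refine mul_le_mul_of_nonneg_left ?_ (by positivity)
    exact pow_le_pow_right₀ (by linarith [Nat.cast_nonneg (α := ℝ) n]) s.2.le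
  · intro s h1 h2
    obtain ⟨k, -, -, h⟩ := hvs s
    exact h
end

section
/- Let M, N be positive integers, let φ : [0,∞) → (0,1] be non-increasing, and let L ∈ ℝ^{M×N} be φ-multiplicatively badly approximable. Let Q ∈ [1,∞)^N, ε, T > 0, a_1,…,a_M ∈ ℝ with Σ_i a_i = 0, c ∈ ℝ, and assume μ_i := θ e^{a_i − c} ≥ c₁ ε^{1/M}/T for all i, for some c₁ > 0. Let λ_1 ≤ … ≤ λ_{M+N} be the successive minima of Λ' := D Λ_L, and let v^1,…,v^{M+N} be a ℤ-basis of Λ' with |v^s|_2 ≤ κ λ_s for all s (κ ≥ 1), written as v^s = D·(L_1 q^s + p^s_1, …, L_M q^s + p^s_M, q^s_1, …, q^s_N) with p^s ∈ ℤ^M, q^s ∈ ℤ^N, q^s ≠ 0 for all s. Assume further: I(v^s) ⊆ I(v^{s+1}) for all s; for all s and l, l ∈ I(v^s) implies {1,…,l} ⊆ I(v^s); and {1,…,max{M+1,s}} ⊆ I(v^s) for all s. Let M ≤ s̲ ≤ M+N−1 and suppose {1,…,s+1} ⊆ I(v^s) for all s = 1,…,s̲. Then there exists a constant c₂ > 0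 depending only on M, N, κ, c, c₁ such that (ε Q^N)^{s̲/(M+N)}/(λ_1⋯λ_{s̲}) ≤ c₂ ( 1 + (ε Q^N/φ(Q))^{s̲/(s̲+1)} ). -/
/-- Distance from a real number to the nearest integer. -/
noncomputable def distNearestInt (x : ℝ) : ℝ := |x - round x|

/-- The geometric mean `(Q₁ ⋯ Q_N)^(1/N)`. -/
noncomputable def geomMean (N : ℕ) (Q : Fin N → ℝ) : ℝ := (∏ j, Q j) ^ ((1 : ℝ) / (N : ℝ))

/-- `L` is `φ`-multiplicatively badly approximable. -/
def multBadlyApprox (M N : ℕ) (φ : ℝ → ℝ) (L : Matrix (Fin M) (Fin N) ℝ) : Prop :=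
  ∀ q : Fin N → ℤ, q ≠ 0 →
    φ ((∏ j, max 1 |(q j : ℝ)|) ^ ((1 : ℝ) / (N : ℝ))) ≤
      (∏ j, max 1 |(q j : ℝ)|) * ∏ i, distNearestInt (∑ j, L i j * (q j : ℝ))

/-- `θ := (ε Q^N)^(1/(M+N)) / ε^(1/M)`. -/
noncomputable def thetaVal (M N : ℕ) (ε Qbar : ℝ) : ℝ :=
  (ε * Qbar ^ N) ^ ((1 : ℝ) / ((M : ℝ) + (N : ℝ))) / ε ^ ((1 : ℝ) / (M : ℝ))

/-- The diagonal entry `μ_i = θ e^(a_i - c)` of the matrix `D`. -/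
noncomputable def muVal (M N : ℕ) (ε : ℝ) (Q : Fin N → ℝ) (c : ℝ) (a : Fin M → ℝ)
    (i : Fin M) : ℝ :=
  thetaVal M N ε (geomMean N Q) * Real.exp (a i - c)

/-- The diagonal entry `ν_j = θ^(-M/N) Q/Q_j` of the matrix `D`. -/
noncomputable def nuVal (M N : ℕ) (ε : ℝ) (Q : Fin N → ℝ) (j : Fin N) : ℝ :=
  thetaVal M N ε (geomMean N Q) ^ (-(M : ℝ) / (N : ℝ)) * geomMean N Q / Q j

/-- The lattice `Λ' = D Λ_L`, as a set of vectors in `ℝ^M × ℝ^N`. -/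
def latticeD (M N : ℕ) (L : Matrix (Fin M) (Fin N) ℝ) (ε : ℝ) (Q : Fin N → ℝ) (c : ℝ)
    (a : Fin M → ℝ) : Set (Fin M ⊕ Fin N → ℝ) :=
  {v | ∃ (p : Fin M → ℤ) (q : Fin N → ℤ),
    (∀ i, v (Sum.inl i) = muVal M N ε Q c a i * ((∑ j, L i j * (q j : ℝ)) + (p i : ℝ))) ∧
    (∀ j, v (Sum.inr j) = nuVal M N ε Q j * (q j : ℝ))}

/-- The vectors `v^s = D (L₁ q^s + p^s₁, …, L_M q^s + p^s_M, q^s)`. -/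
def basisFormD (M N : ℕ) (L : Matrix (Fin M) (Fin N) ℝ) (ε : ℝ) (Q : Fin N → ℝ) (c : ℝ)
    (a : Fin M → ℝ) (v : Fin (M + N) → (Fin M ⊕ Fin N → ℝ))
    (p : Fin (M + N) → Fin M → ℤ) (q : Fin (M + N) → Fin N → ℤ) : Prop :=
  ∀ s, (∀ i, v s (Sum.inl i) =
          muVal M N ε Q c a i * ((∑ j, L i j * (q s j : ℝ)) + (p s i : ℝ))) ∧
       (∀ j, v s (Sum.inr j) = nuVal M N ε Q j * (q s j : ℝ))

/-- The position (in `{1, …, M+N}`) of a coordinate index of `ℝ^M × ℝ^N`. -/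
def ordIdx {M N : ℕ} (k : Fin M ⊕ Fin N) : ℕ :=
  Sum.elim (fun i : Fin M => (i : ℕ) + 1) (fun j : Fin N => M + (j : ℕ) + 1) k

lemma aux_abs_le_enorm2 {ι : Type*} [Fintype ι] (v : ι → ℝ) (i : ι) : |v i| ≤ enorm2 v := by
  unfold enorm2
  rw [← Real.sqrt_sq_eq_abs]
  apply Real.sqrt_le_sqrt
  exact Finset.single_le_sum (f := fun i => v i ^ 2) (fun j _ => sq_nonneg _) (Finset.mem_univ i)

/-- Monotonicity of successive minima up to the number of available independent vectors. -/
lemma aux_succMin_mono {ι : Type*} [Fintype ι] (Λ : Set (ι → ℝ)) (n : ℕ) (v : Fin n → ι → ℝ)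
    (hv : ∀ s, v s ∈ Λ) (hl : LinearIndependent ℝ v) (s t : ℕ) (hst : s ≤ t) (htn : t ≤ n) :
    succMin Λ s ≤ succMin Λ t := by
  unfold succMin
  apply csInf_le_csInf
  · exact ⟨0, fun r hr => hr.1.le⟩
  · refine ⟨1 + ∑ k, enorm2 (v k), ?_, fun k => v (Fin.castLE htn k), fun k => hv _,
      hl.comp _ (Fin.castLE_injective htn), fun k => ?_⟩
    · have : 0 ≤ ∑ k, enorm2 (v k) := Finset.sum_nonneg fun k _ => Real.sqrt_nonneg _
      linarith
    · have := Finset.single_le_sum (f := fun k => enorm2 (v k))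
        (fun j _ => Real.sqrt_nonneg _) (Finset.mem_univ (Fin.castLE htn k))
      linarith
  · rintro r ⟨hr, w, h1, h2, h3⟩
    exact ⟨hr, fun k => w (Fin.castLE hst k), fun k => h1 _,
      h2.comp _ (Fin.castLE_injective hst), fun k => h3 _⟩

lemma aux_prod_reindex (M N sbar : ℕ) (f : ℕ → ℝ) (h1 : M ≤ sbar) (h2 : sbar ≤ M + N - 1)
    (hN : 0 < N) :
    ∏ j : Fin N, (if (j : ℕ) + M ≤ sbar then f ((j : ℕ) + M) else 1) =
      ∏ s ∈ Finset.Ico M (sbar + 1), f s := by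
  rw [Fin.prod_univ_eq_prod_range (fun j => if j + M ≤ sbar then f (j + M) else 1) N]
  rw [Finset.prod_Ico_eq_prod_range]
  rw [← Finset.prod_subset (s₁ := Finset.range (sbar + 1 - M))]
  · apply Finset.prod_congr rfl
    intro j hj
    rw [Finset.mem_range] at hj
    rw [if_pos (by omega), add_comm]
  · intro j hj
    rw [Finset.mem_range] at hj ⊢
    omega
  · intro j _ hj
    rw [Finset.mem_range] at hj
    rw [if_neg (by omega)]

lemma aux_pow_le_prod (ρ : ℕ → ℝ) (a b : ℕ) (h0 : 0 ≤ ρ 1)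
    (hm : ∀ s ∈ Finset.Ico a b, ρ 1 ≤ ρ s) :
    ρ 1 ^ (b - a) ≤ ∏ s ∈ Finset.Ico a b, ρ s := by
  calc ρ 1 ^ (b - a) = ∏ s ∈ Finset.Ico a b, ρ 1 := by simp
    _ ≤ _ := Finset.prod_le_prod (fun _ _ => h0) hm

/-- The final numerical deduction. -/
lemma aux_final (P r Y : ℝ) (s : ℕ) (hP : 0 < P) (hr : 0 < r) (hY : 0 < Y)
    (h1 : Y ≤ r * P) (h2 : r ^ s ≤ P) :
    P⁻¹ ≤ (Y⁻¹) ^ ((s : ℝ) / ((s : ℝ) + 1)) := by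
  have hs : (0 : ℝ) < (s : ℝ) + 1 := by positivity
  have h3 : Y ^ s ≤ P ^ (s + 1) := by
    calc Y ^ s ≤ (r * P) ^ s := pow_le_pow_left₀ hY.le h1 s
      _ = r ^ s * P ^ s := mul_pow _ _ _
      _ ≤ P * P ^ s := by gcongr
      _ = P ^ (s + 1) := by ring
  have h4 : Y ^ ((s : ℝ) / ((s : ℝ) + 1)) ≤ P := by
    have h5 := Real.rpow_le_rpow (by positivity) h3 (by positivity : 0 ≤ ((s : ℝ) + 1)⁻¹)
    have e1 : (Y ^ s) ^ (((s : ℝ) + 1)⁻¹) = Y ^ ((s : ℝ) / ((s : ℝ) + 1)) := by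
      rw [← Real.rpow_natCast, ← Real.rpow_mul hY.le, div_eq_mul_inv]
    have e2 : (P ^ (s + 1)) ^ (((s : ℝ) + 1)⁻¹) = P := by
      rw [← Real.rpow_natCast, ← Real.rpow_mul hP.le]
      push_cast
      rw [mul_inv_cancel₀ hs.ne', Real.rpow_one]
    rwa [e1, e2] at h5
  rw [Real.inv_rpow hY.le]
  exact inv_anti₀ (by positivity) h4

lemma aux_geomMean_pow (N : ℕ) (hN : 0 < N) (Q : Fin N → ℝ) (hQ : ∀ j, 1 ≤ Q j) :
    geomMean N Q ^ N = ∏ j, Q j := by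
  unfold geomMean
  rw [one_div, Real.rpow_inv_natCast_pow _ hN.ne']
  exact Finset.prod_nonneg fun j _ => zero_le_one.trans (hQ j)

lemma aux_geomMean_pos (N : ℕ) (Q : Fin N → ℝ) (hQ : ∀ j, 1 ≤ Q j) :
    0 < geomMean N Q :=
  Real.rpow_pos_of_pos (Finset.prod_pos fun j _ => zero_lt_one.trans_le (hQ j)) _

lemma aux_theta (M N : ℕ) (hM : 0 < M) (hN : 0 < N) (ε G : ℝ) (hε : 0 < ε) (hG : 0 < G) :
    thetaVal M N ε G ^ (-(M : ℝ) / (N : ℝ)) * G =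
      (ε * G ^ N) ^ ((1 : ℝ) / ((M : ℝ) + (N : ℝ))) := by
  have hM' : (0 : ℝ) < M := by exact_mod_cast hM
  have hN' : (0 : ℝ) < N := by exact_mod_cast hN
  have hθ : 0 < thetaVal M N ε G := by unfold thetaVal; positivity
  apply Real.log_injOn_pos
  · exact Set.mem_Ioi.2 (by positivity)
  · exact Set.mem_Ioi.2 (by positivity)
  · rw [Real.log_mul (by positivity) (by positivity), Real.log_rpow hθ,
      Real.log_rpow (by positivity)]
    unfold thetaVal
    rw [Real.log_div (by positivity) (by positivity), Real.log_rpow (by positivity),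
      Real.log_rpow hε, Real.log_mul (by positivity) (by positivity), Real.log_pow]
    field_simp
    ring

lemma aux_prod_mu (M N : ℕ) (hM : 0 < M) (ε : ℝ) (hε : 0 < ε) (Q : Fin N → ℝ)
    (c : ℝ) (a : Fin M → ℝ) (ha : ∑ i, a i = 0) :
    ∏ i, muVal M N ε Q c a i =
      ((ε * geomMean N Q ^ N) ^ ((1 : ℝ) / ((M : ℝ) + (N : ℝ)))) ^ M / ε *
        Real.exp (-(M * c)) := by
  unfold muVal
  rw [Finset.prod_mul_distrib, ← Real.exp_sum, Finset.sum_sub_distrib, ha]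
  simp only [Finset.prod_const, Finset.card_univ, Fintype.card_fin, Finset.sum_const,
    nsmul_eq_mul, zero_sub]
  unfold thetaVal
  rw [div_pow, one_div (M : ℝ), Real.rpow_inv_natCast_pow hε.le hM.ne']

theorem stmt13 (M N : ℕ) (hM : 0 < M) (hN : 0 < N) (κ : ℝ) (hκ : 1 ≤ κ)
    (c c₁ : ℝ) (hc₁ : 0 < c₁) :
    ∃ c₂ : ℝ, 0 < c₂ ∧
      ∀ φ : ℝ → ℝ, AntitoneOn φ (Set.Ici 0) → (∀ x : ℝ, 0 ≤ x → φ x ∈ Set.Ioc (0 : ℝ) 1) →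
      ∀ L : Matrix (Fin M) (Fin N) ℝ, multBadlyApprox M N φ L →
      ∀ Q : Fin N → ℝ, (∀ j, 1 ≤ Q j) →
      ∀ ε T : ℝ, 0 < ε → 0 < T →
      ∀ a : Fin M → ℝ, (∑ i, a i) = 0 →
        (∀ i, c₁ * ε ^ ((1 : ℝ) / (M : ℝ)) / T ≤ muVal M N ε Q c a i) →
      ∀ (v : Fin (M + N) → (Fin M ⊕ Fin N → ℝ))
        (p : Fin (M + N) → Fin M → ℤ) (q : Fin (M + N) → Fin N → ℤ),
        -- `v` is a `ℤ`-basis of `Λ' = D Λ_L`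
        LinearIndependent ℝ v →
        (↑(Submodule.span ℤ (Set.range v)) : Set (Fin M ⊕ Fin N → ℝ)) =
          latticeD M N L ε Q c a →
        -- `|v^s|₂ ≤ κ λ_s` (here `v s` plays the role of `v^(s+1)`)
        (∀ s : Fin (M + N),
          enorm2 (v s) ≤ κ * succMin (latticeD M N L ε Q c a) ((s : ℕ) + 1)) →
        basisFormD M N L ε Q c a v p q →
        -- `q^s ≠ 0` for all `s`
        (∀ s : Fin (M + N), q s ≠ 0) →
        -- `I(v^s) ⊆ I(v^(s+1))`
        (∀ (s : ℕ) (h1 : s < M + N) (h2 : s + 1 < M + N),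
          Iset (v ⟨s, h1⟩) ⊆ Iset (v ⟨s + 1, h2⟩)) →
        -- `l ∈ I(v^s)` implies `{1, …, l} ⊆ I(v^s)`
        (∀ (s : Fin (M + N)) (k : Fin M ⊕ Fin N), k ∈ Iset (v s) →
          ∀ k' : Fin M ⊕ Fin N, ordIdx k' ≤ ordIdx k → k' ∈ Iset (v s)) →
        -- `{1, …, max{M+1, s}} ⊆ I(v^s)`
        (∀ (s : Fin (M + N)) (k : Fin M ⊕ Fin N),
          ordIdx k ≤ max (M + 1) ((s : ℕ) + 1) → k ∈ Iset (v s)) →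
        ∀ sbar : ℕ, M ≤ sbar → sbar ≤ M + N - 1 →
          -- `{1, …, s+1} ⊆ I(v^s)` for all `s = 1, …, sbar`
          (∀ s : Fin (M + N), (s : ℕ) + 1 ≤ sbar →
            ∀ k : Fin M ⊕ Fin N, ordIdx k ≤ (s : ℕ) + 2 → k ∈ Iset (v s)) →
          (ε * geomMean N Q ^ N) ^ ((sbar : ℝ) / ((M : ℝ) + (N : ℝ))) /
              ∏ r ∈ Finset.Icc 1 sbar, succMin (latticeD M N L ε Q c a) r ≤
            c₂ * (1 + (ε * geomMean N Q ^ N / φ (geomMean N Q)) ^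
              ((sbar : ℝ) / ((sbar : ℝ) + 1))) := by
  refine ⟨κ ^ (M + N) * Real.exp (M * |c|), by positivity, ?_⟩
  intro φ hφ hφ' L hL Q hQ ε T hε hT a ha _ v p q hli _ hnorm hform hq _ _ _ sbar hs1 hs2 hI
  have hmem : ∀ s, v s ∈ latticeD M N L ε Q c a := fun s => ⟨p s, q s, hform s⟩
  have hmono := aux_succMin_mono _ (M + N) v hmem hli
  set lam : ℕ → ℝ := succMin (latticeD M N L ε Q c a) with hlam
  set G := geomMean N Q with hGdef
  have hG : 0 < G := aux_geomMean_pos N Q hQ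
  have hGN : G ^ N = ∏ j, Q j := aux_geomMean_pow N hN Q hQ
  set X := ε * G ^ N with hX
  have hXpos : 0 < X := by positivity
  set t := X ^ ((1 : ℝ) / ((M : ℝ) + (N : ℝ))) with ht
  have htpos : 0 < t := by positivity
  have hκ0 : 0 < κ := by linarith
  have hnu : ∀ j, nuVal M N ε Q j = t / Q j := by
    intro j
    unfold nuVal
    rw [aux_theta M N hM hN ε _ hε hG]
  have hmu := aux_prod_mu M N hM ε hε Q c a ha
  have hmupos : ∀ i, 0 < muVal M N ε Q c a i := by
    intro i
    unfold muVal thetaVal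
    exact mul_pos (div_pos htpos (by positivity)) (Real.exp_pos _)
  have hQpos : ∀ j, 0 < Q j := fun j => zero_lt_one.trans_le (hQ j)
  obtain ⟨φpos, φle⟩ := hφ' G hG.le
  let z : Fin (M + N) := ⟨0, by omega⟩
  have hz : enorm2 (v z) ≤ κ * lam 1 := hnorm z
  -- positivity of the first minimum
  have hlam1 : 0 < lam 1 := by
    obtain ⟨j, hj⟩ := Function.ne_iff.1 (hq z)
    have h1 : 0 < |v z (Sum.inr j)| := by
      rw [abs_pos, (hform z).2 j, hnu]
      have : (q z j : ℝ) ≠ 0 := by exact_mod_cast hj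
      have := (hQpos j).ne'
      positivity
    have h2 := aux_abs_le_enorm2 (v z) (Sum.inr j)
    by_contra hc
    push Not at hc
    nlinarith
  have hlampos : ∀ s, 1 ≤ s → s ≤ M + N → 0 < lam s := fun s h1 h2 =>
    hlam1.trans_le (hmono 1 s h1 h2)
  let ρ : ℕ → ℝ := fun s => κ * lam s / t
  have hρ1 : 0 < ρ 1 := by positivity
  have hρmono : ∀ s, 1 ≤ s → s ≤ M + N → ρ 1 ≤ ρ s := by
    intro s h1 h2
    have := hmono 1 s h1 h2
    simp only [ρ]
    gcongr
  have hIcc : Finset.Icc 1 sbar = Finset.Ico 1 (sbar + 1) := by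
    ext x; simp only [Finset.mem_Icc, Finset.mem_Ico]; omega
  set P := ∏ s ∈ Finset.Ico 1 (sbar + 1), ρ s with hP
  have hPpos : 0 < P := by
    apply Finset.prod_pos
    intro s hs
    rw [Finset.mem_Ico] at hs
    exact hρ1.trans_le (hρmono s (by omega) (by omega))
  have hPpow : ρ 1 ^ sbar ≤ P := by
    have := aux_pow_le_prod ρ 1 (sbar + 1) hρ1.le (fun s hs => by
      rw [Finset.mem_Ico] at hs
      exact hρmono s (by omega) (by omega))
    simpa using this
  have hlhs : X ^ ((sbar : ℝ) / ((M : ℝ) + (N : ℝ))) / ∏ r ∈ Finset.Icc 1 sbar, lam r =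
      κ ^ sbar * P⁻¹ := by
    have e1 : X ^ ((sbar : ℝ) / ((M : ℝ) + (N : ℝ))) = t ^ sbar := by
      rw [ht, ← Real.rpow_natCast, ← Real.rpow_mul hXpos.le]
      congr 1
      ring
    have e2 : P = κ ^ sbar * (∏ r ∈ Finset.Icc 1 sbar, lam r) / t ^ sbar := by
      rw [hP, hIcc]
      simp only [ρ]
      rw [Finset.prod_div_distrib, Finset.prod_mul_distrib]
      simp
    have hp : 0 < ∏ r ∈ Finset.Icc 1 sbar, lam r := by
      apply Finset.prod_pos
      intro r hr
      rw [Finset.mem_Icc] at hr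
      exact hlampos r hr.1 (by omega)
    rw [e1, e2]
    field_simp
  rw [hlhs]
  have hκs : κ ^ sbar ≤ κ ^ (M + N) := pow_le_pow_right₀ hκ (by omega)
  have hexp1 : 1 ≤ Real.exp (M * |c|) := Real.one_le_exp (by positivity)
  set W := (X / φ G) ^ ((sbar : ℝ) / ((sbar : ℝ) + 1)) with hW
  have hWpos : 0 < W := by positivity
  suffices hmain : P⁻¹ ≤ Real.exp (M * |c|) * (1 + W) by
    calc κ ^ sbar * P⁻¹ ≤ κ ^ (M + N) * (Real.exp (M * |c|) * (1 + W)) := by gcongr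
      _ = _ := by ring
  rcases le_or_gt 1 (ρ 1) with hcase | hcase
  · have h1 : 1 ≤ P := (one_le_pow₀ hcase).trans hPpow
    have h2 : P⁻¹ ≤ 1 := inv_le_one_of_one_le₀ h1
    nlinarith
  -- the main case
  have hκlt : κ * lam 1 < t := by
    simpa [ρ, div_lt_one htpos] using hcase
  have hvρ : ∀ s : Fin (M + N), ∀ k, |v s k| ≤ t * ρ ((s : ℕ) + 1) := by
    intro s k
    refine (aux_abs_le_enorm2 (v s) k).trans ((hnorm s).trans (le_of_eq ?_))
    simp only [ρ]
    field_simp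
  have hqρ : ∀ s : Fin (M + N), ∀ j, |(q s j : ℝ)| ≤ Q j * ρ ((s : ℕ) + 1) := by
    intro s j
    have h := hvρ s (Sum.inr j)
    rw [(hform s).2 j, hnu, abs_mul, abs_of_pos (div_pos htpos (hQpos j)), div_mul_eq_mul_div,
      mul_div_assoc] at h
    have h' := le_of_mul_le_mul_left h htpos
    rw [div_le_iff₀ (hQpos j)] at h'
    linarith
  have hq1 : ∀ j, |(q z j : ℝ)| ≤ Q j * ρ 1 := hqρ z
  have hmaxQ : ∀ j, max 1 |(q z j : ℝ)| ≤ Q j := by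
    intro j
    refine max_le (hQ j) ((hq1 j).trans ?_)
    have := hQpos j
    nlinarith
  have hmax : ∀ j : Fin N, max 1 |(q z j : ℝ)| ≤
      Q j * (if (j : ℕ) + M ≤ sbar then ρ ((j : ℕ) + M) else 1) := by
    intro j
    split_ifs with hj
    · have hjM : (j : ℕ) + M - 1 < M + N := by omega
      have h1 : 1 ≤ Q j * ρ ((j : ℕ) + M) := by
        have hne := hI ⟨(j : ℕ) + M - 1, hjM⟩ (by simp only; omega) (Sum.inr j)
          (by simp only [ordIdx, Sum.elim_inr]; omega)
        have h2 := hqρ ⟨(j : ℕ) + M - 1, hjM⟩ j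
        have e : (j : ℕ) + M - 1 + 1 = (j : ℕ) + M := by omega
        simp only [e] at h2
        refine le_trans ?_ h2
        have h3 : q ⟨(j : ℕ) + M - 1, hjM⟩ j ≠ 0 := by
          intro h0
          apply hne
          rw [(hform _).2 j, h0]
          simp
        exact_mod_cast Int.one_le_abs h3
      refine max_le h1 ((hq1 j).trans ?_)
      have := hρmono ((j : ℕ) + M) (by omega) (by omega)
      have := hQpos j
      gcongr
    · simpa using hmaxQ j
  have hmax0 : ∀ j : Fin N, 0 ≤ max 1 |(q z j : ℝ)| := fun j => zero_le_one.trans (le_max_left _ _)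
  have hprodmax : ∏ j, max 1 |(q z j : ℝ)| ≤ G ^ N * ∏ s ∈ Finset.Ico M (sbar + 1), ρ s := by
    calc ∏ j, max 1 |(q z j : ℝ)| ≤
        ∏ j : Fin N, (Q j * (if (j : ℕ) + M ≤ sbar then ρ ((j : ℕ) + M) else 1)) :=
          Finset.prod_le_prod (fun j _ => hmax0 j) (fun j _ => hmax j)
      _ = _ := by
        rw [Finset.prod_mul_distrib, aux_prod_reindex M N sbar ρ hs1 hs2 hN, hGN]
  have hφq : φ G ≤ φ ((∏ j, max 1 |(q z j : ℝ)|) ^ ((1 : ℝ) / (N : ℝ))) := by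
    have h0 : 0 ≤ ∏ j, max 1 |(q z j : ℝ)| := Finset.prod_nonneg fun j _ => hmax0 j
    apply hφ
    · exact Set.mem_Ici.2 (by positivity)
    · exact Set.mem_Ici.2 hG.le
    · rw [hGdef]
      unfold geomMean
      apply Real.rpow_le_rpow h0 _ (by positivity)
      exact Finset.prod_le_prod (fun j _ => hmax0 j) (fun j _ => hmaxQ j)
  have hbad := hφq.trans (hL (q z) (hq z))
  have hdist : (∏ i, muVal M N ε Q c a i) * ∏ i, distNearestInt (∑ j, L i j * (q z j : ℝ)) ≤
      (t * ρ 1) ^ M := by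
    rw [← Finset.prod_mul_distrib]
    calc _ ≤ ∏ i : Fin M, t * ρ 1 := by
          apply Finset.prod_le_prod
          · intro i _
            exact mul_nonneg (hmupos i).le (abs_nonneg _)
          · intro i _
            have h := hvρ z (Sum.inl i)
            rw [(hform z).1 i, abs_mul, abs_of_pos (hmupos i)] at h
            refine le_trans ?_ h
            have hr := round_le (∑ j, L i j * (q z j : ℝ)) (-(p z i))
            push_cast at hr
            rw [sub_neg_eq_add] at hr
            exact mul_le_mul_of_nonneg_left hr (hmupos i).le
      _ = _ := by simp
  have hY : Real.exp (-(M * c)) * φ G / X ≤ ρ 1 * P := by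
    have hmuP : 0 < ∏ i, muVal M N ε Q c a i := Finset.prod_pos fun i _ => hmupos i
    have h1 : (∏ i, muVal M N ε Q c a i) * φ G ≤
        (t * ρ 1) ^ M * (G ^ N * ∏ s ∈ Finset.Ico M (sbar + 1), ρ s) := by
      calc (∏ i, muVal M N ε Q c a i) * φ G ≤ (∏ i, muVal M N ε Q c a i) *
            ((∏ j, max 1 |(q z j : ℝ)|) * ∏ i, distNearestInt (∑ j, L i j * (q z j : ℝ))) := by
            gcongr
        _ = ((∏ i, muVal M N ε Q c a i) * ∏ i, distNearestInt (∑ j, L i j * (q z j : ℝ))) *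
            ∏ j, max 1 |(q z j : ℝ)| := by ring
        _ ≤ _ := mul_le_mul hdist hprodmax (Finset.prod_nonneg fun j _ => hmax0 j)
            (by positivity)
    have h2 : ρ 1 ^ M * ∏ s ∈ Finset.Ico M (sbar + 1), ρ s ≤ ρ 1 * P := by
      have h3 := aux_pow_le_prod ρ 1 M hρ1.le (fun s hs => by
        rw [Finset.mem_Ico] at hs
        exact hρmono s (by omega) (by omega))
      rw [hP, ← Finset.prod_Ico_consecutive ρ (show 1 ≤ M by omega) (show M ≤ sbar + 1 by omega)]
      have e : ρ 1 ^ M = ρ 1 * ρ 1 ^ (M - 1) := by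
        rw [← pow_succ']; congr 1; omega
      rw [e, mul_assoc]
      have h4 : 0 ≤ ∏ s ∈ Finset.Ico M (sbar + 1), ρ s := by
        apply Finset.prod_nonneg
        intro s hs
        rw [Finset.mem_Ico] at hs
        exact hρ1.le.trans (hρmono s (by omega) (by omega))
      gcongr
    refine le_trans ?_ h2
    rw [hmu] at h1
    have e : (t * ρ 1) ^ M * (G ^ N * ∏ s ∈ Finset.Ico M (sbar + 1), ρ s) =
        t ^ M / ε * (X * (ρ 1 ^ M * ∏ s ∈ Finset.Ico M (sbar + 1), ρ s)) := by
      rw [hX, mul_pow]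
      field_simp
    rw [e, mul_assoc] at h1
    have h5 := le_of_mul_le_mul_left h1 (by positivity)
    rw [div_le_iff₀ hXpos]
    linarith
  have hfin := aux_final P (ρ 1) _ sbar hPpos hρ1 (by positivity) hY hPpow
  refine hfin.trans ?_
  have e : (Real.exp (-(M * c)) * φ G / X)⁻¹ = Real.exp (M * c) * (X / φ G) := by
    rw [Real.exp_neg]
    field_simp
  rw [e, Real.mul_rpow (Real.exp_pos _).le (by positivity), ← hW]
  have hs01 : (sbar : ℝ) / ((sbar : ℝ) + 1) ≤ 1 := by
    rw [div_le_one (by positivity)]; linarith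
  have hs00 : 0 ≤ (sbar : ℝ) / ((sbar : ℝ) + 1) := by positivity
  have h6 : Real.exp (M * c) ^ ((sbar : ℝ) / ((sbar : ℝ) + 1)) ≤ Real.exp (M * |c|) := by
    calc _ ≤ Real.exp (M * |c|) ^ ((sbar : ℝ) / ((sbar : ℝ) + 1)) := by
          apply Real.rpow_le_rpow (Real.exp_pos _).le _ hs00
          apply Real.exp_le_exp.2
          gcongr
          exact le_abs_self c
      _ ≤ Real.exp (M * |c|) ^ (1 : ℝ) := Real.rpow_le_rpow_of_exponent_le hexp1 hs01
      _ = _ := Real.rpow_one _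
  calc _ ≤ Real.exp (M * |c|) * W := by gcongr
    _ ≤ _ := by gcongr; linarith
end

section
/- Let M, N be positive integers and let t = (t_{sj}) be an (M+N−1)×N matrix with entries in {0,1} satisfying: t_{s1} = 1 for all s; t_{sj} ≤ t_{(s+1)j} for all s < M+N−1 and all j; if t_{sj} = 1 then t_{sj'} = 1 for all j' ≤ j; and t_{sj} = 1 whenever M ≤ s ≤ M+N−1 and j ≤ s+1−M. For each s let h_s := max{j : t_{sj} = 1}. Define k_s := M + h_s for s = 1,…,M, and recursively k_s := (M + h_s)·(1 − Σ_{r=1}^{s−1} (1 − t_{r(s+1−M)})/k_r)^{−1} for s = M+1,…,M+N−1. Set α_s := Σ_{r=1}^{s} 1/k_r and α_{sj} := Σ_{r=1}^{s} t_{rj}/k_r. Then: the recursion is well defined, i.e. 1 − Σ_{r=1}^{s−1} (1 − t_{r(s+1−M)})/k_r > 0 for every s = M+1,…,M+N−1; (i) k_s ≥ M + h_s for all s = 1,…,M+N−1; and (ii) for all s = M,…,M+N−1, (s+1)·α_s + Σ_{j=s+2−M}^{N} α_{sj} = s (the sum being empty if s+1−M = N), and consequently α_s ≤ s/(s+1).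 -/
theorem stmt15 (M N : ℕ) (hM : 0 < M) (hN : 0 < N)
    -- `t` is the (M+N-1) × N matrix of zeros and ones (rows `s ∈ {1,…,M+N-1}`,
    -- columns `j ∈ {1,…,N}`), `h s` is the largest `j` with `t s j = 1`,
    -- and `k` is the associated sequence of weight sums
    (t : ℕ → ℕ → ℝ) (h : ℕ → ℕ) (k : ℕ → ℝ)
    (ht01 : ∀ s j, 1 ≤ s → s ≤ M + N - 1 → 1 ≤ j → j ≤ N → t s j = 0 ∨ t s j = 1)
    (htone : ∀ s, 1 ≤ s → s ≤ M + N - 1 → t s 1 = 1)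
    (htmono : ∀ s j, 1 ≤ s → s + 1 ≤ M + N - 1 → 1 ≤ j → j ≤ N → t s j ≤ t (s + 1) j)
    (htdown : ∀ s j j', 1 ≤ s → s ≤ M + N - 1 → 1 ≤ j' → j' ≤ j → j ≤ N →
      t s j = 1 → t s j' = 1)
    (htdiag : ∀ s j, M ≤ s → s ≤ M + N - 1 → 1 ≤ j → j ≤ s + 1 - M → t s j = 1)
    (hh : ∀ s, 1 ≤ s → s ≤ M + N - 1 →
      1 ≤ h s ∧ h s ≤ N ∧ t s (h s) = 1 ∧ ∀ j, h s < j → j ≤ N → t s j ≠ 1)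
    -- `k s = M + h s` for `s = 1, …, M`
    (hkbase : ∀ s, 1 ≤ s → s ≤ M → k s = (M : ℝ) + (h s : ℝ))
    -- recursion defining `k s` for `s = M+1, …, M+N-1`
    (hkrec : ∀ s, M + 1 ≤ s → s ≤ M + N - 1 →
      k s = ((M : ℝ) + (h s : ℝ)) *
        (1 - ∑ r ∈ Finset.Icc 1 (s - 1), (1 - t r (s + 1 - M)) / k r)⁻¹) :
    -- the recursion is well defined
    (∀ s, M + 1 ≤ s → s ≤ M + N - 1 →
      0 < 1 - ∑ r ∈ Finset.Icc 1 (s - 1), (1 - t r (s + 1 - M)) / k r) ∧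
    -- (i) `k s ≥ M + h s`
    (∀ s, 1 ≤ s → s ≤ M + N - 1 → (M : ℝ) + (h s : ℝ) ≤ k s) ∧
    -- (ii) `(s+1) α_s + ∑_{j > s+1-M} α_{sj} = s`, hence `α_s ≤ s/(s+1)`
    (∀ s, M ≤ s → s ≤ M + N - 1 →
      (((s : ℝ) + 1) * (∑ r ∈ Finset.Icc 1 s, (k r)⁻¹) +
          ∑ j ∈ Finset.Icc (s + 2 - M) N, ∑ r ∈ Finset.Icc 1 s, t r j / k r = (s : ℝ)) ∧
      (∑ r ∈ Finset.Icc 1 s, (k r)⁻¹) ≤ (s : ℝ) / ((s : ℝ) + 1)) := by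
  have hkpos' : ∀ s, 1 ≤ s → s ≤ M + N - 1 → (0:ℝ) < (M : ℝ) + (h s : ℝ) := by
    intro s _ _
    have : (0:ℝ) < M := by exact_mod_cast hM
    positivity
  -- row sums
  have hrow : ∀ s c, 1 ≤ s → s ≤ M + N - 1 → 1 ≤ c → c ≤ h s →
      ∑ j ∈ Finset.Icc (c + 1) N, t s j = (h s : ℝ) - c := by
    intro s c h1 h2 hc hch
    obtain ⟨ha, hb, hd, he⟩ := hh s h1 h2
    have hsub : Finset.Icc (c + 1) (h s) ⊆ Finset.Icc (c + 1) N :=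
      Finset.Icc_subset_Icc le_rfl hb
    rw [← Finset.sum_subset hsub]
    · rw [Finset.sum_congr rfl (g := fun _ => (1:ℝ))]
      · simp only [Finset.sum_const, Nat.card_Icc, nsmul_eq_mul, mul_one]
        rw [Nat.add_sub_add_right, Nat.cast_sub hch]
      · intro j hj
        rw [Finset.mem_Icc] at hj
        exact htdown s (h s) j h1 h2 (by omega) hj.2 hb hd
    · intro j hj hj'
      rw [Finset.mem_Icc] at hj hj'
      have := he j (by omega) hj.2
      rcases ht01 s j h1 h2 (by omega) hj.2 with h0 | h0
      · exact h0
      · exact absurd h0 this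
  have htnn : ∀ s j, 1 ≤ s → s ≤ M + N - 1 → 1 ≤ j → j ≤ N → 0 ≤ t s j ∧ t s j ≤ 1 := by
    intro s j h1 h2 h3 h4
    rcases ht01 s j h1 h2 h3 h4 with h0 | h0 <;> rw [h0] <;> norm_num
  -- the bound on alpha follows from the identity
  have hbound : ∀ i, M + i ≤ M + N - 1 →
      (∀ r, 1 ≤ r → r ≤ M + i → (M : ℝ) + (h r : ℝ) ≤ k r) →
      (((M + i : ℕ) : ℝ) + 1) * (∑ r ∈ Finset.Icc 1 (M + i), (k r)⁻¹) +
          ∑ j ∈ Finset.Icc (i + 2) N, ∑ r ∈ Finset.Icc 1 (M + i), t r j / k r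
            = ((M + i : ℕ) : ℝ) →
      (∑ r ∈ Finset.Icc 1 (M + i), (k r)⁻¹) ≤ ((M + i : ℕ) : ℝ) / (((M + i : ℕ) : ℝ) + 1) := by
    intro i hi hk hid
    rw [le_div_iff₀ (by positivity)]
    have : 0 ≤ ∑ j ∈ Finset.Icc (i + 2) N, ∑ r ∈ Finset.Icc 1 (M + i), t r j / k r := by
      refine Finset.sum_nonneg fun j hj => Finset.sum_nonneg fun r hr => ?_
      rw [Finset.mem_Icc] at hj hr
      have h1 := hk r hr.1 hr.2
      have h2 := hkpos' r hr.1 (by omega)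
      exact div_nonneg (htnn r j hr.1 (by omega) (by omega) hj.2).1 (by linarith)
    linarith
  -- positivity of the denominator
  have hden : ∀ i, M + (i + 1) ≤ M + N - 1 →
      (∀ r, 1 ≤ r → r ≤ M + i → (M : ℝ) + (h r : ℝ) ≤ k r) →
      (∑ r ∈ Finset.Icc 1 (M + i), (k r)⁻¹) ≤ ((M + i : ℕ) : ℝ) / (((M + i : ℕ) : ℝ) + 1) →
      0 < 1 - ∑ r ∈ Finset.Icc 1 (M + i), (1 - t r (i + 2)) / k r ∧
      0 ≤ ∑ r ∈ Finset.Icc 1 (M + i), (1 - t r (i + 2)) / k r := by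
    intro i hi hk hb
    constructor
    · have h1 : ∑ r ∈ Finset.Icc 1 (M + i), (1 - t r (i + 2)) / k r ≤
          ∑ r ∈ Finset.Icc 1 (M + i), (k r)⁻¹ := by
        refine Finset.sum_le_sum fun r hr => ?_
        rw [Finset.mem_Icc] at hr
        have h1 := hk r hr.1 hr.2
        have h2 := hkpos' r hr.1 (by omega)
        have h3 := (htnn r (i + 2) hr.1 (by omega) (by omega) (by omega)).1
        rw [div_eq_mul_inv]
        have : 0 < (k r)⁻¹ := inv_pos.mpr (by linarith)
        nlinarith
      have h2 : ((M + i : ℕ) : ℝ) / (((M + i : ℕ) : ℝ) + 1) < 1 := by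
        rw [div_lt_one (by positivity)]
        linarith
      linarith
    · refine Finset.sum_nonneg fun r hr => ?_
      rw [Finset.mem_Icc] at hr
      have h1 := hk r hr.1 hr.2
      have h2 := hkpos' r hr.1 (by omega)
      have h3 := (htnn r (i + 2) hr.1 (by omega) (by omega) (by omega)).2
      exact div_nonneg (by linarith) (by linarith)
  have key : ∀ i, M + i ≤ M + N - 1 →
      (∀ r, 1 ≤ r → r ≤ M + i → (M : ℝ) + (h r : ℝ) ≤ k r) ∧
      (((M + i : ℕ) : ℝ) + 1) * (∑ r ∈ Finset.Icc 1 (M + i), (k r)⁻¹) +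
          ∑ j ∈ Finset.Icc (i + 2) N, ∑ r ∈ Finset.Icc 1 (M + i), t r j / k r
            = ((M + i : ℕ) : ℝ) := by
    intro i
    induction i with
    | zero =>
      intro hi
      refine ⟨fun r h1 h2 => (hkbase r h1 h2).ge, ?_⟩
      rw [Finset.sum_comm, Finset.mul_sum, ← Finset.sum_add_distrib]
      rw [Finset.sum_congr rfl (g := fun _ => (1:ℝ))]
      · simp
      · intro r hr
        rw [Finset.mem_Icc] at hr
        have h2 := hkpos' r hr.1 (by omega)
        rw [← Finset.sum_div, hrow r 1 hr.1 (by omega) le_rfl (hh r hr.1 (by omega)).1,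
          hkbase r hr.1 hr.2]
        field_simp
        push_cast
        ring
    | succ i ih =>
      intro hi
      obtain ⟨hk, hid⟩ := ih (by omega)
      obtain ⟨hD, hD'⟩ := hden i hi hk (hbound i (by omega) hk hid)
      have hrec := hkrec (M + (i + 1)) (by omega) hi
      rw [show M + (i + 1) - 1 = M + i by omega, show M + (i + 1) + 1 - M = i + 2 by omega] at hrec
      have hpos := hkpos' (M + (i + 1)) (by omega) hi
      have hh' : i + 2 ≤ h (M + (i + 1)) := by
        by_contra hlt
        exact (hh (M + (i + 1)) (by omega) hi).2.2.2 (i + 2) (by omega) (by omega)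
          (htdiag _ _ (by omega) hi (by omega) (by omega))
      have hrw := hrow (M + (i + 1)) (i + 2) (by omega) hi (by omega) hh'
      have hS : ∑ r ∈ Finset.Icc 1 (M + i), (1 - t r (i + 2)) / k r =
          ∑ r ∈ Finset.Icc 1 (M + i), (k r)⁻¹ - ∑ r ∈ Finset.Icc 1 (M + i), t r (i + 2) / k r := by
        rw [← Finset.sum_sub_distrib]
        refine Finset.sum_congr rfl fun r _ => ?_
        rw [sub_div, one_div]
      refine ⟨?_, ?_⟩
      · intro r h1 h2
        rcases Nat.lt_or_ge (M + i) r with h3 | h3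
        · obtain rfl : r = M + (i + 1) := by omega
          rw [hrec]
          exact le_mul_of_one_le_right hpos.le ((one_le_inv₀ hD).mpr (by linarith))
        · exact hk r h1 h3
      · have hkinv : ((M : ℝ) + (h (M + (i + 1)) : ℝ)) * (k (M + (i + 1)))⁻¹ =
            1 - ∑ r ∈ Finset.Icc 1 (M + i), (1 - t r (i + 2)) / k r := by
          rw [hrec]
          field_simp
        rw [hS] at hkinv
        rw [← Finset.add_sum_Ioc_eq_sum_Icc (by omega : i + 2 ≤ N)] at hid
        rw [show Finset.Ioc (i + 2) N = Finset.Icc (i + 3) N by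
          ext x; simp only [Finset.mem_Ioc, Finset.mem_Icc]; omega] at hid
        have e1 : ∀ f : ℕ → ℝ, ∑ r ∈ Finset.Icc 1 (M + (i + 1)), f r =
            ∑ r ∈ Finset.Icc 1 (M + i), f r + f (M + (i + 1)) := fun f =>
          Finset.sum_Icc_succ_top (by omega) f
        simp only [e1, Finset.sum_add_distrib]
        rw [← Finset.sum_div, show i + 1 + 2 = i + 2 + 1 by ring, hrw, div_eq_mul_inv]
        rw [show i + 3 = i + 2 + 1 by ring] at hid
        push_cast at hid hkinv ⊢
        linarith
  refine ⟨?_, ?_, ?_⟩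
  · intro s h1 h2
    obtain ⟨i, rfl⟩ : ∃ i, s = M + (i + 1) := ⟨s - M - 1, by omega⟩
    obtain ⟨hk, hid⟩ := key i (by omega)
    rw [show M + (i + 1) - 1 = M + i by omega, show M + (i + 1) + 1 - M = i + 2 by omega]
    exact (hden i h2 hk (hbound i (by omega) hk hid)).1
  · intro s h1 h2
    exact (key (N - 1) (by omega)).1 s h1 (by omega)
  · intro s h1 h2
    obtain ⟨i, rfl⟩ : ∃ i, s = M + i := ⟨s - M, by omega⟩
    obtain ⟨hk, hid⟩ := key i h2
    rw [show M + i + 2 - M = i + 2 by omega]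
    exact ⟨hid, hbound i h2 hk hid⟩
end
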